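/- For every pair of nonnegative integers (a,b), not both zero, the lower Christoffel word w_{a,b} is balanced, and every balanced binary word u with Parikh vector (a,b) satisfies w_{a,b} ≤ u in the lexicographic order induced by 0 < 1; that is, w_{a,b} is the lexicographically smallest balanced word with Parikh vector (a,b). -/

import Mathlib

/-- The lower Christoffel word `w_{a,b}`: the binary word of length `a+b` whose
`k`-th letter (1-based) is `⌊kb/(a+b)⌋ - ⌊(k-1)b/(a+b)⌋` (with `false = 0`, `true = 1`). -/
def lowerChristoffel (a b : ℕ) : List Bool :=
  (List.range (a + b)).map fun i => decide ((i + 1) * b / (a + b) ≠ i * b / (a + b))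

/-- The upper Christoffel word `W_{a,b}`: the binary word of length `a+b` whose
`k`-th letter is `⌈kb/(a+b)⌉ - ⌈(k-1)b/(a+b)⌉`. -/
def upperChristoffel (a b : ℕ) : List Bool :=
  (List.range (a + b)).map fun i =>
    decide (((i + 1) * b + (a + b) - 1) / (a + b) ≠ (i * b + (a + b) - 1) / (a + b))

/-- `p` is a period of `w`: `p` is positive and `w_i = w_{i+p}` for all valid indices. -/
def HasPeriod (w : List Bool) (p : ℕ) : Prop :=
  0 < p ∧ ∀ i, i + p < w.length → w.getD i false = w.getD (i + p) false

/-- A central word: a binary word with two coprime periods `p`, `q` and length `p + q - 2`. -/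
def IsCentral (w : List Bool) : Prop :=
  ∃ p q : ℕ, Nat.Coprime p q ∧ HasPeriod w p ∧ HasPeriod w q ∧ w.length + 2 = p + q

/-- A binary word is balanced if any two factors of the same length have numbers of `1`s
differing by at most `1`. -/
def BalancedWord (w : List Bool) : Prop :=
  ∀ u v : List Bool, u <:+: w → v <:+: w → u.length = v.length →
    |(u.count true : ℤ) - (v.count true : ℤ)| ≤ 1

/-- `w^m`: the `m`-th power of the word `w`. -/
def wpow (w : List Bool) (m : ℕ) : List Bool := (List.replicate m w).flatten

/-- A word is primitive if it is not a proper power. -/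
def IsPrimitiveWord (w : List Bool) : Prop := ¬ ∃ (v : List Bool) (m : ℕ), 2 ≤ m ∧ w = wpow v m

/-- A Lyndon word: a nonempty primitive word lexicographically strictly smaller than all
of its proper nonempty suffixes (for the order `0 < 1`, i.e. `false < true`). -/
def IsLyndonWord (w : List Bool) : Prop :=
  w ≠ [] ∧ IsPrimitiveWord w ∧
    ∀ u v : List Bool, w = u ++ v → u ≠ [] → v ≠ [] → List.Lex (· < ·) w v

/-- `p` is the minimal period of `w`. -/
def IsMinPeriod (w : List Bool) (p : ℕ) : Prop :=
  HasPeriod w p ∧ ∀ q : ℕ, HasPeriod w q → p ≤ q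

/-- `u` is a factor of the infinite periodic word `w^ω`. -/
def IsOmegaFactor (u w : List Bool) : Prop := ∃ m : ℕ, u <:+: wpow w m

/-- A primitive Christoffel word: a lower or upper Christoffel word `w_{a,b}` with
`gcd(a,b) = 1`. -/
def IsPrimitiveChristoffel (c : List Bool) : Prop :=
  ∃ a b : ℕ, Nat.Coprime a b ∧ (c = lowerChristoffel a b ∨ c = upperChristoffel a b)

lemma blocks_le (n d : ℕ) (c : ℤ) (S : ℕ → ℤ)
    (h : ∀ i, i + d ≤ n → S (i + d) - S i ≤ c) (s q : ℕ) (hq : s + q * d ≤ n) :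
    S (s + q * d) - S s ≤ q * c := by
  induction q with
  | zero => simp
  | succ q ih =>
    have e : s + (q + 1) * d = s + q * d + d := by ring
    rw [e] at hq ⊢
    have h1 := ih (by omega)
    have h2 := h _ hq
    push_cast
    linarith

lemma core_false (n b m : ℕ) (S : ℕ → ℤ) (S0 : S 0 = 0) (Sn : S n = b) (hm1 : 1 ≤ m)
    (hmn : m ≤ n)
    (bal : ∀ i j l, i + l ≤ n → j + l ≤ n → S (i + l) - S i ≤ S (j + l) - S j + 1)
    (hk : ∀ k < m, S k = ((k * b / n : ℕ) : ℤ)) (hm : S m + 1 = ((m * b / n : ℕ) : ℤ)) :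
    False := by
  have hn : 0 < n := by omega
  by_cases hd : n ∣ m * b
  · obtain ⟨d, e, hco, hnd, hbe⟩ := Nat.exists_coprime n b
    set g := n.gcd b with hg
    have hgpos : 0 < g := Nat.gcd_pos_of_pos_left _ hn
    have hdpos : 0 < d := by
      rcases Nat.eq_zero_or_pos d with h | h
      · subst h; omega
      · exact h
    have hdm : d ∣ m := by
      have : d * g ∣ (m * e) * g := by
        rw [← hnd, mul_assoc, ← hbe]; exact hd
      exact hco.dvd_of_dvd_mul_right (Nat.dvd_of_mul_dvd_mul_right hgpos this)
    obtain ⟨t, rfl⟩ := hdm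
    have hval : ∀ k, d * k * b / n = k * e := by
      intro k
      apply Nat.div_eq_of_eq_mul_right hn
      rw [hnd, hbe]; ring
    obtain ⟨t, rfl⟩ : ∃ s, t = s + 1 := ⟨t - 1, by
      rcases Nat.eq_zero_or_pos t with h | h
      · subst h; omega
      · omega⟩
    rw [hval] at hm
    have h1 := hk (d * t) (by nlinarith)
    rw [hval] at h1
    have e1 : d * (t + 1) = d * t + d := by ring
    have hblk : ∀ i, i + d ≤ n → S (i + d) - S i ≤ e := by
      intro i hi
      have := bal i (d * t) d hi (by omega)
      rw [← e1] at this
      push_cast at hm h1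
      linarith
    have htg : t + 1 ≤ g := by
      have : d * (t + 1) ≤ d * g := by rw [← hnd]; exact hmn
      exact Nat.le_of_mul_le_mul_left this hdpos
    obtain ⟨f, hf⟩ := Nat.exists_eq_add_of_le htg
    have hn' : d * (t + 1) + f * d = n := by rw [hnd, hf]; ring
    have h2 := blocks_le n d e S hblk (d * (t + 1)) f (by omega)
    rw [hn', Sn] at h2
    have hb' : (b : ℤ) = e * (t + 1 + f) := by
      have : b = e * (t + 1 + f) := by rw [← hf]; exact hbe
      exact_mod_cast this
    push_cast at hm
    nlinarith
  · have hblk : ∀ i, i + m ≤ n → S (i + m) - S i ≤ ((m * b / n : ℕ) : ℤ) := by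
      intro i hi
      have := bal i 0 m hi (by omega)
      rw [zero_add, S0] at this
      linarith
    have hr : n % m < m := Nat.mod_lt _ hm1
    have hdm := Nat.div_add_mod n m
    have hq : 1 ≤ n / m := (Nat.one_le_div_iff hm1).2 hmn
    obtain ⟨q, hq'⟩ := Nat.exists_eq_add_of_le hq
    set r := n % m
    rw [hq'] at hdm
    have e1 : m + q * m + r = n := by rw [← hdm]; ring
    have h1 := blocks_le n m _ S hblk m q (by omega)
    have h2 := bal (m + q * m) 0 r (by omega) (by omega)
    rw [e1, Sn, zero_add, S0, hk r hr] at h2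
    have h3 : n * (m * b / n) < m * b :=
      lt_of_le_of_ne (Nat.mul_div_le _ _) (fun h => hd ⟨_, h.symm⟩)
    have h4 : n * (r * b / n) ≤ r * b := Nat.mul_div_le _ _
    set c := m * b / n
    set c' := r * b / n
    have h5 : b ≤ (1 + q) * c + c' := by
      have : (b : ℤ) ≤ (1 + q) * c + c' := by linarith
      exact_mod_cast this
    have h6 : n * b ≤ (1 + q) * (n * c) + n * c' := by
      calc n * b ≤ n * ((1 + q) * c + c') := Nat.mul_le_mul_left _ h5
        _ = _ := by ring
    have h7 : (1 + q) * (n * c) < (1 + q) * (m * b) := Nat.mul_lt_mul_of_pos_left h3 (by omega)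
    have h8 : n * b = (1 + q) * (m * b) + r * b := by rw [← e1]; ring
    omega

lemma lex_cases : ∀ x y : List Bool, x.length = y.length →
    x = y ∨ List.Lex (· < ·) x y ∨
      ∃ p s t, x = p ++ true :: s ∧ y = p ++ false :: t
  | [], [], _ => Or.inl rfl
  | [], _ :: _, h => by simp at h
  | _ :: _, [], h => by simp at h
  | c :: x, d :: y, h => by
    rcases lt_trichotomy c d with hc | hc | hc
    · exact Or.inr (Or.inl (List.Lex.rel hc))
    · subst hc
      rcases lex_cases x y (by simpa using h) with h | h | ⟨p, s, t, h1, h2⟩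
      · left; rw [h]
      · right; left; exact List.Lex.cons h
      · right; right; exact ⟨c :: p, s, t, by simp [h1], by simp [h2]⟩
    · right; right
      have : c = true ∧ d = false := by clear h; revert hc; revert c d; decide
      exact ⟨[], x, y, by simp [this.1], by simp [this.2]⟩

lemma count_take_add (u : List Bool) (i l : ℕ) :
    (u.take (i + l)).count true = (u.take i).count true + ((u.drop i).take l).count true := by
  rw [List.take_add, List.count_append]

lemma christoffel_len (a b : ℕ) : (lowerChristoffel a b).length = a + b := by
  simp [lowerChristoffel]

lemma christoffel_count (a b k : ℕ) (hk : k ≤ a + b) :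
    ((lowerChristoffel a b).take k).count true = k * b / (a + b) := by
  induction k with
  | zero => simp
  | succ k ih =>
    have hn : 0 < a + b := by omega
    have hlt : k < (lowerChristoffel a b).length := by rw [christoffel_len]; omega
    rw [List.take_succ_eq_append_getElem hlt, List.count_append, ih (by omega)]
    have h1 : k * b / (a + b) ≤ (k + 1) * b / (a + b) :=
      Nat.div_le_div_right (Nat.mul_le_mul_right _ (by omega))
    have h2 : (k + 1) * b / (a + b) ≤ k * b / (a + b) + 1 := by
      rw [← Nat.add_div_right _ hn]
      apply Nat.div_le_div_right
      rw [add_mul]; omega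
    by_cases h : (k + 1) * b / (a + b) = k * b / (a + b)
    · simp [lowerChristoffel, h]
    · simp [lowerChristoffel, h]
      omega

lemma div_add_bounds (n x y : ℕ) (hn : 0 < n) :
    x / n + y / n ≤ (x + y) / n ∧ (x + y) / n ≤ x / n + y / n + 1 := by
  constructor
  · exact Nat.div_add_div_le_add_div
  · rw [Nat.add_div hn]; split_ifs <;> omega

lemma christoffel_factor (a b : ℕ) (hn : 0 < a + b) (u : List Bool)
    (hu : u <:+: lowerChristoffel a b) :
    u.length * b / (a + b) ≤ u.count true ∧ u.count true ≤ u.length * b / (a + b) + 1 := by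
  obtain ⟨p, s, h⟩ := hu
  have hlen := christoffel_len a b
  rw [← h] at hlen
  simp only [List.length_append] at hlen
  have h1 := christoffel_count a b p.length (by omega)
  have h2 := christoffel_count a b (p.length + u.length) (by omega)
  have e1 : (lowerChristoffel a b).take p.length = p := by rw [← h]; simp
  have e2 : (lowerChristoffel a b).take (p.length + u.length) = p ++ u := by
    rw [← h, ← List.length_append, List.take_left]
  rw [e1] at h1
  rw [e2, List.count_append, add_mul] at h2
  have := div_add_bounds (a + b) (p.length * b) (u.length * b) hn
  omega

/-- For every `(a,b)` not both zero, `w_{a,b}` is the lexicographically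
smallest balanced word with Parikh vector `(a,b)`. -/
theorem stmt8 (a b : ℕ) (hab : a ≠ 0 ∨ b ≠ 0) :
    BalancedWord (lowerChristoffel a b) ∧
    ∀ u : List Bool, BalancedWord u → u.count false = a → u.count true = b →
      lowerChristoffel a b = u ∨ List.Lex (· < ·) (lowerChristoffel a b) u := by
  have hn : 0 < a + b := by omega
  constructor
  · intro u v hu hv huv
    have h1 := christoffel_factor a b hn u hu
    have h2 := christoffel_factor a b hn v hv
    rw [← huv] at h2
    rw [abs_le]
    omega
  · intro u hu ha hb
    have hlen : u.length = a + b := by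
      rw [← ha, ← hb, add_comm]; exact (List.count_true_add_count_false u).symm
    rcases lex_cases (lowerChristoffel a b) u (by rw [christoffel_len, hlen]) with
      h | h | ⟨p, s, t, h1, h2⟩
    · exact Or.inl h
    · exact Or.inr h
    · exfalso
      have hpl : p.length + 1 ≤ a + b := by
        rw [← hlen, h2]; simp
      refine core_false (a + b) b (p.length + 1) (fun k => ((u.take k).count true : ℤ))
        (by simp) ?_ (by omega) hpl ?_ ?_ ?_
      · simp only [← hlen, List.take_length, hb]
      · intro i j l hi hj
        have hfac : ∀ i, (u.drop i).take l <:+: u := fun i =>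
          (List.take_prefix _ _).isInfix.trans (List.drop_suffix _ _).isInfix
        have := hu _ _ (hfac i) (hfac j) (by simp; omega)
        rw [abs_le] at this
        simp only [count_take_add]
        push_cast
        linarith [this.2]
      · intro k hk
        have := christoffel_count a b k (by omega)
        rw [← this, h1, h2, List.take_append_of_le_length (by omega),
          List.take_append_of_le_length (by omega)]
      · have := christoffel_count a b (p.length + 1) hpl
        rw [← this, h1, h2]
        simp [List.take_append]
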